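/- For every positive integer k there exist a training set (E, λ) with E ⊆ ℝ^k and a reasonable decision tree T for (E, λ) with zero errors such that: (i) some sequence of subtree raising operations pruning exactly k inner nodes in total transforms T into a decision tree with zero errors on (E, λ); and (ii) for every j with 1 ≤ j < k, every decision tree obtained from T by subtree raising operations pruning exactly j inner nodes in total has at least one error on (E, λ). -/

import Mathlib

/-- The two class labels. -/
inductive Label where
  | blue
  | red
deriving DecidableEq

/-- A decision tree over examples `ι → ℝ` with classes `{blue, red}`:
every inner node carries a feature and a threshold, every leaf a class label.
An example goes to the left child if its value in the node's feature is at most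
the threshold, and to the right child otherwise. -/
inductive DTree (ι : Type) where
  | leaf (c : Label)
  | node (feat : ι) (thr : ℝ) (left right : DTree ι)

namespace DTree

variable {ι : Type}

/-- The class that a decision tree assigns to an example. -/
noncomputable def classify : DTree ι → (ι → ℝ) → Label
  | .leaf c, _ => c
  | .node f t l r, e => if e f ≤ t then l.classify e else r.classify e

/-- The routing path of an example (`false` = left child, `true` = right child);
it is the position of the leaf of the example. -/
noncomputable def route : DTree ι → (ι → ℝ) → List Bool
  | .leaf _, _ => []
  | .node f t l r, e => if e f ≤ t then false :: l.route e else true :: r.route e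

/-- The subtree rooted at a position (`none` if the position is not a node). -/
def subtreeAt : DTree ι → List Bool → Option (DTree ι)
  | T, [] => some T
  | .leaf _, _ :: _ => none
  | .node _ _ l r, b :: p => (if b then r else l).subtreeAt p

/-- Replace the subtree at a given position by another tree. -/
def replaceAt : DTree ι → List Bool → DTree ι → DTree ι
  | _, [], T' => T'
  | .leaf c, _ :: _, _ => .leaf c
  | .node f t l r, b :: p, T' =>
      if b then .node f t l (r.replaceAt p T') else .node f t (l.replaceAt p T') r

/-- The number of inner nodes of a decision tree. -/
def innerCount : DTree ι → ℕ
  | .leaf _ => 0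
  | .node _ _ l r => 1 + l.innerCount + r.innerCount

/-- The position `p` is an inner node of `T`. -/
def IsInnerPos (T : DTree ι) (p : List Bool) : Prop :=
  ∃ f t l r, T.subtreeAt p = some (.node f t l r)

/-- The position `p` is a node of `T`. -/
def IsNodePos (T : DTree ι) (p : List Bool) : Prop :=
  (T.subtreeAt p).isSome

/-- The feature and threshold of the inner node at position `p`. -/
def cutAt (T : DTree ι) (p : List Bool) : Option (ι × ℝ) :=
  match T.subtreeAt p with
  | some (.node f t _ _) => some (f, t)
  | _ => none

/-- The subtree raising operation at position `q` keeping the child in direction `b`: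
the subtree rooted at `q` is replaced by the subtree rooted at its `b`-child; it prunes
the node at `q` together with all inner nodes of the subtree rooted at the other child. -/
def raiseAt (T : DTree ι) (q : List Bool) (b : Bool) : DTree ι :=
  match T.subtreeAt q with
  | some (.node _ _ l r) => T.replaceAt q (if b then r else l)
  | _ => T

end DTree

/-- `E[T,p]`: the examples of `E` whose routing through `T` passes the position `p`. -/
noncomputable def reach {ι : Type} (E : Finset (ι → ℝ)) (T : DTree ι) (p : List Bool) :
    Finset (ι → ℝ) :=
  E.filter fun e => p <+: T.route e

/-- The number of errors of `T` on the training set `(E, lab)`. -/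
noncomputable def errCount {ι : Type} (T : DTree ι) (E : Finset (ι → ℝ))
    (lab : (ι → ℝ) → Label) : ℕ :=
  (E.filter fun e => T.classify e ≠ lab e).card

/-- A most frequent label of the labeled set `(E, lab)` (blue in case of a tie). -/
def majorityLabel {ι : Type} (E : Finset (ι → ℝ)) (lab : (ι → ℝ) → Label) : Label :=
  if (E.filter fun e => lab e = Label.red).card ≤ (E.filter fun e => lab e = Label.blue).card
  then Label.blue else Label.red

/-- One subtree replacement operation: some inner node of `T` is replaced by a leaf
labeled with a most frequent label of the examples reaching it. -/
def ReplStep {ι : Type} (E : Finset (ι → ℝ)) (lab : (ι → ℝ) → Label)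
    (T T' : DTree ι) : Prop :=
  ∃ p, T.IsInnerPos p ∧
    T' = T.replaceAt p (.leaf (majorityLabel (reach E T p) lab))

/-- `T` is a reasonable decision tree for `(E, lab)`: every node is reached by some
example and every leaf carries a most frequent label of the examples reaching it. -/
def Reasonable {ι : Type} (E : Finset (ι → ℝ)) (lab : (ι → ℝ) → Label)
    (T : DTree ι) : Prop :=
  (∀ p, T.IsNodePos p → (reach E T p).Nonempty) ∧
  (∀ p c, T.subtreeAt p = some (.leaf c) → ∀ c' : Label,
    ((reach E T p).filter fun e => lab e = c').card ≤
      ((reach E T p).filter fun e => lab e = c).card)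

/-- Apply a sequence of raising operations (given by positions and kept directions). -/
def applySeq {ι : Type} : DTree ι → List (List Bool × Bool) → DTree ι
  | T, [] => T
  | T, (q, b) :: rest => applySeq (T.raiseAt q b) rest

/-- Each raising operation of the sequence is applied at an inner node. -/
def ValidSeq {ι : Type} : DTree ι → List (List Bool × Bool) → Prop
  | _, [] => True
  | T, (q, b) :: rest => T.IsInnerPos q ∧ ValidSeq (T.raiseAt q b) rest

/-- The total number of inner nodes pruned by a sequence of raising operations. -/
def seqPruned {ι : Type} : DTree ι → List (List Bool × Bool) → ℕ
  | _, [] => 0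
  | T, (q, b) :: rest =>
      (match T.subtreeAt q with
        | some (.node _ _ l r) => 1 + DTree.innerCount (if b then l else r)
        | _ => 0) + seqPruned (T.raiseAt q b) rest

/-- `T'` is obtained from `T` by a (possibly empty) sequence of subtree raising
operations. -/
def RaisedFrom {ι : Type} (T T' : DTree ι) : Prop :=
  ∃ steps, ValidSeq T steps ∧ applySeq T steps = T'

/-- `T'` is obtained from `T` by a sequence of subtree raising operations pruning
exactly `m` inner nodes in total. -/
def RaisedFromPruning {ι : Type} (T : DTree ι) (m : ℕ) (T' : DTree ι) : Prop :=
  ∃ steps, ValidSeq T steps ∧ seqPruned T steps = m ∧ applySeq T steps = T'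

/-- Tracking the position of a node through one raising operation: nodes strictly
below the raised node on the discarded side, and the raised node itself, are pruned
(`none`); all other nodes survive at a possibly shifted position. -/
def stepMap (q : List Bool) (b : Bool) (p : List Bool) : Option (List Bool) :=
  if q <+: p then
    if q ++ [b] <+: p then some (q ++ p.drop (q.length + 1)) else none
  else some p

/-- Tracking the position of a node through a sequence of raising operations. -/
def seqMap : List (List Bool × Bool) → List Bool → Option (List Bool)
  | [], p => some p
  | (q, b) :: rest, p => (stepMap q b p).bind (seqMap rest)

/-- The number of errors of `T` on a multiset of labeled examples. -/
noncomputable def errCountM {ι : Type} (T : DTree ι) (E : Multiset ((ι → ℝ) × Label)) : ℕ :=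
  (E.filter fun q => T.classify q.1 ≠ q.2).card

/-!
Take two copies of a chain of `k - 1` cuts in a feature `f`, whose leaf labels alternate, and join
them by a cut in another feature `g`. The root is superfluous, so raising either copy prunes exactly
`k` inner nodes and changes no class.

On either side of the root the examples form a coordinatewise monotone sequence along which the
label changes `k - 1` times. A cut separates consecutive members of such a sequence at most once,
so a tree classifying the sequence correctly has at least `k - 1` inner nodes. A tree that arises by
pruning fewer than `k` of the `2k - 1` inner nodes keeps at least `k` of them, hence the original
root among them, since raising at the root leaves at most `k - 1` inner nodes. If it makes no error,
both subtrees of its root still have all their `k - 1` inner nodes, so nothing was pruned.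
-/

open Finset

theorem card_crossings_le_one {α : Type*} [LinearOrder α] {u : ℕ → α} (hu : Monotone u) (t : α)
    (s : Finset ℕ) : #{x ∈ s | u x ≤ t ∧ t < u (x + 1)} ≤ 1 := by
  have not_lt_of_crossing : ∀ {x y}, t < u (x + 1) → u y ≤ t → ¬ x < y := fun hx hy hxy =>
    ((hu hxy).trans hy).not_gt hx
  refine card_le_one.2 fun x hx y hy => ?_
  obtain ⟨-, hxt, htx⟩ := mem_filter.1 hx
  obtain ⟨-, hyt, hty⟩ := mem_filter.1 hy
  exact le_antisymm (not_lt.1 (not_lt_of_crossing hty hxt)) (not_lt.1 (not_lt_of_crossing htx hyt))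

namespace DTree

variable {ι : Type}

section Raising

theorem raiseAt_leaf (c : Label) (q : List Bool) (b : Bool) :
    (leaf c : DTree ι).raiseAt q b = leaf c := by
  cases q <;> rfl

theorem raiseAt_node_nil (f : ι) (t : ℝ) (l r : DTree ι) (b : Bool) :
    (node f t l r).raiseAt [] b = if b then r else l := rfl

theorem raiseAt_node_false (f : ι) (t : ℝ) (l r : DTree ι) (q : List Bool) (b : Bool) :
    (node f t l r).raiseAt (false :: q) b = node f t (l.raiseAt q b) r := by
  simp only [raiseAt, subtreeAt, Bool.false_eq_true, if_false]
  split <;> simp_all [replaceAt]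

theorem raiseAt_node_true (f : ι) (t : ℝ) (l r : DTree ι) (q : List Bool) (b : Bool) :
    (node f t l r).raiseAt (true :: q) b = node f t l (r.raiseAt q b) := by
  simp only [raiseAt, subtreeAt, if_true]
  split <;> simp_all [replaceAt]

/-- The number of inner nodes pruned by the raising operation at position `q` keeping the child in
direction `b`; it is `0` if `q` is not an inner node. This is the summand of `seqPruned`. -/
def prunedCount (T : DTree ι) (q : List Bool) (b : Bool) : ℕ :=
  match T.subtreeAt q with
  | some (.node _ _ l r) => 1 + innerCount (if b then l else r)
  | _ => 0

theorem seqPruned_cons (T : DTree ι) (q : List Bool) (b : Bool) (steps : List (List Bool × Bool)) :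
    seqPruned T ((q, b) :: steps) = T.prunedCount q b + seqPruned (T.raiseAt q b) steps := rfl

theorem prunedCount_leaf (c : Label) (q : List Bool) (b : Bool) :
    (leaf c : DTree ι).prunedCount q b = 0 := by
  cases q <;> rfl

theorem prunedCount_node_nil (f : ι) (t : ℝ) (l r : DTree ι) (b : Bool) :
    (node f t l r).prunedCount [] b = 1 + innerCount (if b then l else r) := rfl

theorem prunedCount_node_cons (f : ι) (t : ℝ) (l r : DTree ι) (a : Bool) (q : List Bool)
    (b : Bool) :
    (node f t l r).prunedCount (a :: q) b = (if a then r else l).prunedCount q b := rfl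

theorem prunedCount_add_innerCount_raiseAt (T : DTree ι) (q : List Bool) (b : Bool) :
    T.prunedCount q b + (T.raiseAt q b).innerCount = T.innerCount := by
  induction T generalizing q with
  | leaf c => rw [prunedCount_leaf, raiseAt_leaf, zero_add]
  | node f t l r ihl ihr =>
    rcases q with _ | ⟨_ | _, q⟩
    · rw [prunedCount_node_nil, raiseAt_node_nil]
      cases b
      · exact add_right_comm 1 r.innerCount l.innerCount
      · rfl
    · rw [prunedCount_node_cons, raiseAt_node_false, innerCount, innerCount, ← ihl q]
      simp only [Bool.false_eq_true, if_false]
      ring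
    · rw [prunedCount_node_cons, raiseAt_node_true, innerCount, innerCount, ← ihr q]
      simp only [if_true]
      ring

theorem innerCount_raiseAt_le (T : DTree ι) (q : List Bool) (b : Bool) :
    (T.raiseAt q b).innerCount ≤ T.innerCount :=
  (Nat.le_add_left _ _).trans_eq (prunedCount_add_innerCount_raiseAt T q b)

theorem seqPruned_add_innerCount_applySeq (T : DTree ι) (steps : List (List Bool × Bool)) :
    seqPruned T steps + (applySeq T steps).innerCount = T.innerCount := by
  induction steps generalizing T with
  | nil => exact zero_add _
  | cons step steps ih =>
    obtain ⟨q, b⟩ := step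
    rw [seqPruned_cons, applySeq, add_assoc, ih, prunedCount_add_innerCount_raiseAt]

theorem innerCount_applySeq_le (T : DTree ι) (steps : List (List Bool × Bool)) :
    (applySeq T steps).innerCount ≤ T.innerCount :=
  (Nat.le_add_left _ _).trans_eq (seqPruned_add_innerCount_applySeq T steps)

theorem applySeq_node_eq_node_or_innerCount_le {m : ℕ} (f : ι) (t : ℝ) {l r : DTree ι}
    (hl : l.innerCount ≤ m) (hr : r.innerCount ≤ m) (steps : List (List Bool × Bool)) :
    (∃ l' r', applySeq (node f t l r) steps = node f t l' r') ∨
      (applySeq (node f t l r) steps).innerCount ≤ m := by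
  induction steps generalizing l r with
  | nil => exact .inl ⟨l, r, rfl⟩
  | cons step steps ih =>
    obtain ⟨q, b⟩ := step
    rw [applySeq]
    rcases q with _ | ⟨_ | _, q⟩
    · rw [raiseAt_node_nil]
      exact .inr ((innerCount_applySeq_le _ _).trans (by cases b <;> assumption))
    · rw [raiseAt_node_false]
      exact ih ((innerCount_raiseAt_le l q b).trans hl) hr
    · rw [raiseAt_node_true]
      exact ih hl ((innerCount_raiseAt_le r q b).trans hr)

end Raising

section Changes

theorem card_classify_ne_succ_le_innerCount (T : DTree ι) {e : ℕ → ι → ℝ} (he : Monotone e)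
    (s : Finset ℕ) : #{x ∈ s | T.classify (e x) ≠ T.classify (e (x + 1))} ≤ T.innerCount := by
  induction T with
  | leaf c => simp [classify, innerCount]
  | node f t l r ihl ihr =>
    have hchange : {x ∈ s | (node f t l r).classify (e x) ≠ (node f t l r).classify (e (x + 1))} ⊆
        {x ∈ s | e x f ≤ t ∧ t < e (x + 1) f} ∪
          {x ∈ s | l.classify (e x) ≠ l.classify (e (x + 1))} ∪
          {x ∈ s | r.classify (e x) ≠ r.classify (e (x + 1))} := by
      intro x
      have hstep : e x f ≤ e (x + 1) f := he x.le_succ f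
      simp only [mem_union, mem_filter, classify]
      grind
    calc #{x ∈ s | (node f t l r).classify (e x) ≠ (node f t l r).classify (e (x + 1))}
        ≤ #{x ∈ s | e x f ≤ t ∧ t < e (x + 1) f} +
          #{x ∈ s | l.classify (e x) ≠ l.classify (e (x + 1))} +
          #{x ∈ s | r.classify (e x) ≠ r.classify (e (x + 1))} :=
          (card_le_card hchange).trans <| (card_union_le _ _).trans <|
            Nat.add_le_add_right (card_union_le _ _) _
      _ ≤ 1 + l.innerCount + r.innerCount := by
          gcongr
          exact card_crossings_le_one (fun _ _ hxy => he hxy f) t s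

theorem le_innerCount_of_classify_ne_succ {T : DTree ι} {e : ℕ → ι → ℝ} (he : Monotone e) {n : ℕ}
    (h : ∀ x < n, T.classify (e x) ≠ T.classify (e (x + 1))) : n ≤ T.innerCount := by
  simpa [filter_true_of_mem fun x hx => h x (mem_range.1 hx)]
    using card_classify_ne_succ_le_innerCount T he (range n)

end Changes

section Reasonable

theorem errCount_eq_zero_iff {T : DTree ι} {E : Finset (ι → ℝ)} {lab : (ι → ℝ) → Label} :
    errCount T E lab = 0 ↔ ∀ e ∈ E, T.classify e = lab e := by
  simp [errCount, filter_eq_empty_iff]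

theorem errCount_classify_self (T : DTree ι) (E : Finset (ι → ℝ)) :
    errCount T E T.classify = 0 :=
  errCount_eq_zero_iff.2 fun _ _ => rfl

theorem classify_eq_of_prefix_route {T : DTree ι} {p : List Bool} {c : Label} {e : ι → ℝ}
    (hp : T.subtreeAt p = some (.leaf c)) (h : p <+: T.route e) : T.classify e = c := by
  induction p generalizing T with
  | nil => cases T <;> simp_all [subtreeAt, classify]
  | cons a p ih =>
    cases T with
    | leaf c => simp [subtreeAt] at hp
    | node f t l r =>
      simp only [route] at h
      simp only [subtreeAt] at hp
      simp only [classify]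
      split_ifs at h ⊢ <;> obtain ⟨rfl, h'⟩ := List.cons_prefix_cons.1 h <;> exact ih hp h'

/-- Every node of `T` is reached by an example of `E`; this is the first of the two conditions in
`Reasonable`. -/
def AllReached (E : Finset (ι → ℝ)) (T : DTree ι) : Prop :=
  ∀ p, T.IsNodePos p → (reach E T p).Nonempty

theorem reasonable_of_errCount_eq_zero {E : Finset (ι → ℝ)} {lab : (ι → ℝ) → Label} {T : DTree ι}
    (hreach : AllReached E T) (herr : errCount T E lab = 0) : Reasonable E lab T := by
  refine ⟨hreach, fun p c hp c' => card_le_card fun e he => ?_⟩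
  have hep : e ∈ reach E T p := (mem_filter.1 he).1
  obtain ⟨heE, hroute⟩ := mem_filter.1 hep
  have hlab : lab e = c :=
    (errCount_eq_zero_iff.1 herr e heE).symm.trans (classify_eq_of_prefix_route hp hroute)
  exact mem_filter.2 ⟨hep, hlab⟩

theorem reach_nil (E : Finset (ι → ℝ)) (T : DTree ι) : reach E T [] = E := by
  simp [reach]

theorem reach_node_false (E : Finset (ι → ℝ)) (f : ι) (t : ℝ) (l r : DTree ι) (p : List Bool) :
    reach E (node f t l r) (false :: p) = reach {e ∈ E | e f ≤ t} l p := by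
  rw [reach, reach, filter_filter]
  refine filter_congr fun e _ => ?_
  by_cases h : e f ≤ t <;> simp only [route, h] <;> simp

theorem reach_node_true (E : Finset (ι → ℝ)) (f : ι) (t : ℝ) (l r : DTree ι) (p : List Bool) :
    reach E (node f t l r) (true :: p) = reach {e ∈ E | ¬ e f ≤ t} r p := by
  rw [reach, reach, filter_filter]
  refine filter_congr fun e _ => ?_
  by_cases h : e f ≤ t <;> simp only [route, h] <;> simp

theorem AllReached.nonempty {E : Finset (ι → ℝ)} {T : DTree ι} (h : AllReached E T) :
    E.Nonempty :=
  reach_nil E T ▸ h [] rfl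

theorem allReached_leaf {E : Finset (ι → ℝ)} (hE : E.Nonempty) (c : Label) :
    AllReached E (leaf c) := by
  rintro (_ | ⟨a, p⟩) hp
  · rwa [reach_nil]
  · simp [IsNodePos, subtreeAt] at hp

theorem AllReached.node {E : Finset (ι → ℝ)} {f : ι} {t : ℝ} {l r : DTree ι}
    (hl : AllReached {e ∈ E | e f ≤ t} l) (hr : AllReached {e ∈ E | ¬ e f ≤ t} r) :
    AllReached E (node f t l r) := by
  rintro (_ | ⟨_ | _, p⟩) hp
  · rw [reach_nil]
    exact hl.nonempty.mono (filter_subset _ E)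
  · rw [reach_node_false]
    exact hl p hp
  · rw [reach_node_true]
    exact hr p hp

end Reasonable

section Chain

/-- The chain of cuts in the feature `f` at the thresholds `n - 1, …, 0` (from the root
downwards), whose leaves carry the labels `c 0, …, c n` from left to right. -/
noncomputable def chain (f : ι) (c : ℕ → Label) : ℕ → DTree ι
  | 0 => .leaf (c 0)
  | n + 1 => .node f n (chain f c n) (.leaf (c (n + 1)))

/-- The thresholds `0, …, n - 1` compare with the value of `e` in the feature `f` as with `x`, so
that, for `x ≤ n`, the example `e` belongs to leaf number `x` of a chain of `n` cuts. For `n = 0`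
the feature is irrelevant. -/
def AtLevel (f : ι) (n x : ℕ) (e : ι → ℝ) : Prop :=
  ∀ i < n, e f ≤ i ↔ x ≤ i

theorem AtLevel.of_succ {f : ι} {n x : ℕ} {e : ι → ℝ} (h : AtLevel f (n + 1) x e) :
    AtLevel f n x e :=
  fun i hi => h i (hi.trans n.lt_succ_self)

theorem innerCount_chain (f : ι) (c : ℕ → Label) (n : ℕ) : (chain f c n).innerCount = n := by
  induction n with
  | zero => rfl
  | succ n ih => rw [chain, innerCount, innerCount, ih, add_zero, add_comm]

theorem classify_chain {f : ι} (c : ℕ → Label) {n x : ℕ} {e : ι → ℝ} (he : AtLevel f n x e)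
    (hx : x ≤ n) : (chain f c n).classify e = c x := by
  induction n with
  | zero => rw [Nat.le_zero.1 hx, chain, classify]
  | succ n ih =>
    simp only [chain, classify, he n n.lt_succ_self]
    split_ifs with hxn
    · exact ih he.of_succ hxn
    · rw [le_antisymm hx (not_le.1 hxn)]

theorem allReached_chain {f : ι} (c : ℕ → Label) {n : ℕ} {E : Finset (ι → ℝ)}
    (hE : ∀ x ≤ n, ∃ e ∈ E, AtLevel f n x e) : AllReached E (chain f c n) := by
  induction n generalizing E with
  | zero =>
    obtain ⟨e, he, -⟩ := hE 0 le_rfl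
    exact allReached_leaf ⟨e, he⟩ _
  | succ n ih =>
    refine .node (ih fun x hx => ?_) (allReached_leaf ?_ _)
    · obtain ⟨e, he, hlevel⟩ := hE x (hx.trans n.le_succ)
      exact ⟨e, mem_filter.2 ⟨he, (hlevel n n.lt_succ_self).2 hx⟩, hlevel.of_succ⟩
    · obtain ⟨e, he, hlevel⟩ := hE (n + 1) le_rfl
      exact ⟨e, mem_filter.2 ⟨he, (hlevel n n.lt_succ_self).not.2 n.not_succ_le_self⟩⟩

end Chain

section DoubleChain

/-- The label of the `n`-th leaf of a chain with alternating labels. -/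
def altLabel (n : ℕ) : Label := if Even n then .blue else .red

theorem altLabel_ne_succ (n : ℕ) : altLabel n ≠ altLabel (n + 1) := by
  by_cases h : Even n <;> simp [altLabel, h, Nat.even_add_one]

/-- The tree of the construction: a cut in the feature `g` that joins two copies of the
alternating chain of `n` cuts in the feature `f`. -/
noncomputable def doubleChain (f g : ι) (n : ℕ) : DTree ι :=
  .node g 0 (chain f altLabel n) (chain f altLabel n)

theorem innerCount_doubleChain (f g : ι) (n : ℕ) : (doubleChain f g n).innerCount = 1 + n + n := by
  rw [doubleChain, innerCount, innerCount_chain]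

theorem classify_doubleChain (f g : ι) (n : ℕ) :
    (doubleChain f g n).classify = (chain f altLabel n).classify :=
  funext fun _ => ite_self _

theorem raisedFromPruning_doubleChain_chain (f g : ι) (n : ℕ) :
    RaisedFromPruning (doubleChain f g n) (n + 1) (chain f altLabel n) := by
  refine ⟨[([], true)], ⟨⟨_, _, _, _, rfl⟩, trivial⟩, ?_, rfl⟩
  rw [seqPruned_cons, doubleChain, prunedCount_node_nil, if_pos rfl, innerCount_chain, add_comm 1]
  rfl

open scoped Classical in
/-- The example with value `0` (for `s = false`) or `1` (for `s = true`) in the feature `g`, which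
places it on side `s` of the root of `doubleChain f g n`, and value `x` in all other features. -/
noncomputable def sidedPoint (g : ι) (s : Bool) (x : ℕ) : ι → ℝ :=
  fun i => if i = g then (if s then 1 else 0) else x

theorem sidedPoint_le_zero_iff (g : ι) (s : Bool) (x : ℕ) :
    sidedPoint g s x g ≤ 0 ↔ s = false := by
  cases s <;> simp [sidedPoint]

theorem monotone_sidedPoint (g : ι) (s : Bool) : Monotone (sidedPoint g s) := by
  intro x y hxy i
  rw [sidedPoint, sidedPoint]
  split_ifs
  exacts [le_rfl, le_rfl, Nat.cast_le.2 hxy]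

theorem atLevel_sidedPoint {f g : ι} {n : ℕ} (hfg : 0 < n → f ≠ g) (s : Bool) (x : ℕ) :
    AtLevel f n x (sidedPoint g s x) := fun i hi => by
  rw [sidedPoint, if_neg (hfg (i.zero_le.trans_lt hi)), Nat.cast_le]

theorem classify_node_sidedPoint (g : ι) (s : Bool) (x : ℕ) (l r : DTree ι) :
    (node g 0 l r).classify (sidedPoint g s x) =
      (if s then r else l).classify (sidedPoint g s x) := by
  cases s <;> simp [classify, sidedPoint_le_zero_iff]

open scoped Classical in
/-- The examples of the construction: the points `sidedPoint g s x` with `x ≤ n`. -/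
noncomputable def sidedPoints (g : ι) (n : ℕ) : Finset (ι → ℝ) :=
  (univ ×ˢ range (n + 1)).image fun q : Bool × ℕ => sidedPoint g q.1 q.2

theorem sidedPoint_mem_sidedPoints (g : ι) (s : Bool) {n x : ℕ} (hx : x ≤ n) :
    sidedPoint g s x ∈ sidedPoints g n := by
  classical
  exact mem_image.2 ⟨(s, x), by simpa using Nat.lt_succ_of_le hx, rfl⟩

theorem allReached_doubleChain {f g : ι} {n : ℕ} (hfg : 0 < n → f ≠ g) :
    AllReached (sidedPoints g n) (doubleChain f g n) := by
  refine .node (allReached_chain _ fun x hx => ?_) (allReached_chain _ fun x hx => ?_)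
  · exact ⟨sidedPoint g false x,
      mem_filter.2 ⟨sidedPoint_mem_sidedPoints g false hx, by simp [sidedPoint_le_zero_iff]⟩,
      atLevel_sidedPoint hfg false x⟩
  · exact ⟨sidedPoint g true x,
      mem_filter.2 ⟨sidedPoint_mem_sidedPoints g true hx, by simp [sidedPoint_le_zero_iff]⟩,
      atLevel_sidedPoint hfg true x⟩

theorem le_innerCount_of_errCount_node_eq_zero {f g : ι} {n : ℕ} (hfg : 0 < n → f ≠ g)
    {l r : DTree ι}
    (h : errCount (node g 0 l r) (sidedPoints g n) (chain f altLabel n).classify = 0) (s : Bool) :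
    n ≤ (if s then r else l).innerCount := by
  have hclass : ∀ x ≤ n, (if s then r else l).classify (sidedPoint g s x) = altLabel x :=
    fun x hx => by
      rw [← classify_node_sidedPoint,
        errCount_eq_zero_iff.1 h _ (sidedPoint_mem_sidedPoints g s hx),
        classify_chain _ (atLevel_sidedPoint hfg s x) hx]
  refine le_innerCount_of_classify_ne_succ (monotone_sidedPoint g s) fun x hx => ?_
  rw [hclass x hx.le, hclass (x + 1) hx]
  exact altLabel_ne_succ x

theorem eq_zero_of_raisedFromPruning_doubleChain {f g : ι} {n j : ℕ} (hfg : 0 < n → f ≠ g)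
    (hj : j ≤ n) {T : DTree ι} (hT : RaisedFromPruning (doubleChain f g n) j T)
    (herr : errCount T (sidedPoints g n) (chain f altLabel n).classify = 0) : j = 0 := by
  obtain ⟨steps, -, hpruned, rfl⟩ := hT
  have hcount := seqPruned_add_innerCount_applySeq (doubleChain f g n) steps
  rw [hpruned, innerCount_doubleChain] at hcount
  have hn : (chain f altLabel n).innerCount ≤ n := (innerCount_chain f altLabel n).le
  rcases applySeq_node_eq_node_or_innerCount_le g 0 hn hn steps with ⟨l, r, hnode⟩ | hsmall
  · rw [doubleChain, hnode] at hcount herr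
    have hl : n ≤ l.innerCount := le_innerCount_of_errCount_node_eq_zero hfg herr false
    have hr : n ≤ r.innerCount := le_innerCount_of_errCount_node_eq_zero hfg herr true
    rw [innerCount] at hcount
    omega
  · rw [doubleChain] at hcount
    omega

end DoubleChain

end DTree

open DTree

theorem stmt11_general {ι : Type} [Nonempty ι] (k : ℕ) (hk : 1 ≤ k) (hι : 2 ≤ k → Nontrivial ι) :
    ∃ (E : Finset (ι → ℝ)) (lab : (ι → ℝ) → Label) (T : DTree ι),
      Reasonable E lab T ∧ errCount T E lab = 0
      ∧ (∃ T', RaisedFromPruning T k T' ∧ errCount T' E lab = 0)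
      ∧ (∀ j : ℕ, 1 ≤ j → j < k →
          ∀ T', RaisedFromPruning T j T' → 1 ≤ errCount T' E lab) := by
  obtain ⟨n, rfl⟩ : ∃ n, k = n + 1 := Nat.exists_eq_add_of_le' hk
  obtain ⟨f, g, hfg⟩ : ∃ f g : ι, 0 < n → f ≠ g := by
    by_cases hn : 0 < n
    · obtain ⟨f, g, hfg⟩ := (hι (Nat.succ_le_succ hn)).exists_pair_ne
      exact ⟨f, g, fun _ => hfg⟩
    · exact ⟨Classical.arbitrary ι, Classical.arbitrary ι, fun h => absurd h hn⟩
  have hzero : errCount (doubleChain f g n) (sidedPoints g n) (chain f altLabel n).classify = 0 :=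
    classify_doubleChain f g n ▸ errCount_classify_self ..
  refine ⟨sidedPoints g n, (chain f altLabel n).classify, doubleChain f g n,
    reasonable_of_errCount_eq_zero (allReached_doubleChain hfg) hzero, hzero,
    ⟨chain f altLabel n, raisedFromPruning_doubleChain_chain f g n, errCount_classify_self ..⟩,
    fun j hj hjn T' hT' => Nat.one_le_iff_ne_zero.2 fun herr => ?_⟩
  exact Nat.one_le_iff_ne_zero.1 hj
    (eq_zero_of_raisedFromPruning_doubleChain hfg (Nat.le_of_lt_succ hjn) hT' herr)

/-- For every positive integer `k` there are a training set
`(E, lab)` with `E ⊆ ℝ^k` and a reasonable decision tree `T` for `(E, lab)` with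
zero errors such that some sequence of subtree raising operations pruning exactly
`k` inner nodes in total transforms `T` into a decision tree with zero errors,
while for every `1 ≤ j < k`, every decision tree obtained from `T` by subtree
raising operations pruning exactly `j` inner nodes in total has at least one
error on `(E, lab)`. -/
theorem stmt11 (k : ℕ) (hk : 1 ≤ k) :
    ∃ (E : Finset (Fin k → ℝ)) (lab : (Fin k → ℝ) → Label) (T : DTree (Fin k)),
      Reasonable E lab T ∧ errCount T E lab = 0
      ∧ (∃ T', RaisedFromPruning T k T' ∧ errCount T' E lab = 0)
      ∧ (∀ j : ℕ, 1 ≤ j → j < k →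
          ∀ T', RaisedFromPruning T j T' → 1 ≤ errCount T' E lab) := by
  have : NeZero k := ⟨Nat.one_le_iff_ne_zero.1 hk⟩
  exact stmt11_general k hk Fin.nontrivial_iff_two_le.2
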